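/- Let 0 < β ≤ 1/4 and let δ > 0 satisfy 2δ·|1−2β| < 1 and δ² < 6. Set τ := 1 − 2β, η := |τ|·(1 + δ|τ| + (2/3)·δ²|τ|² − δ²|τ|²·log(1 − 2δ|τ|)), and ξ := 2β − η·(1 + 2βδ + (4β²/3)·δ² + δ²/6 + δ³/(6−δ²)). Then ξ ≤ 0. In particular, the feasibility condition ξ > 0 required by the convergence theorem for the backward iteration can never be satisfied when β ≤ 1/4. -/

import Mathlib

/-- The constant `η` of the convergence conditions for the Stiefel logarithm under the `β`-metric,
as a function of `δ` and `τ`; the metric enters only through `τ = 1 - 2 * β`. The formula is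
meaningful for `2 * δ * |τ| < 1`, where the argument of the logarithm is positive. -/
noncomputable def stiefelLogEta (δ τ : ℝ) : ℝ :=
  |τ| * (1 + δ * |τ| + (2 / 3) * δ ^ 2 * |τ| ^ 2 -
    δ ^ 2 * |τ| ^ 2 * Real.log (1 - 2 * δ * |τ|))

/-- The factor multiplying `η` in the constant `ξ`. The formula is intended for `δ ^ 2 < 6`, where
the denominator of its last summand is positive. -/
noncomputable def stiefelLogFactor (β δ : ℝ) : ℝ :=
  1 + 2 * β * δ + (4 * β ^ 2 / 3) * δ ^ 2 + δ ^ 2 / 6 + δ ^ 3 / (6 - δ ^ 2)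

/-- The constant `ξ`, whose positivity is the feasibility condition for the backward iteration,
with `τ` and `η` expressed through `β` and `δ`. -/
noncomputable def stiefelLogXi (β δ : ℝ) : ℝ :=
  2 * β - stiefelLogEta δ (1 - 2 * β) * stiefelLogFactor β δ

theorem abs_le_stiefelLogEta {δ τ : ℝ} (hδ : 0 ≤ δ) (hδτ : 2 * δ * |τ| < 1) :
    |τ| ≤ stiefelLogEta δ τ := by
  have log_nonpos : Real.log (1 - 2 * δ * |τ|) ≤ 0 :=
    Real.log_nonpos (by linarith) (sub_le_self 1 (by positivity))
  have log_term_nonpos : δ ^ 2 * |τ| ^ 2 * Real.log (1 - 2 * δ * |τ|) ≤ 0 :=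
    mul_nonpos_of_nonneg_of_nonpos (by positivity) log_nonpos
  have poly_terms_nonneg : 0 ≤ δ * |τ| + (2 / 3) * δ ^ 2 * |τ| ^ 2 := by positivity
  exact le_mul_of_one_le_right (abs_nonneg τ) (by linarith)

theorem one_le_stiefelLogFactor {β δ : ℝ} (hβ : 0 ≤ β) (hδ : 0 ≤ δ) (hδ6 : δ ^ 2 < 6) :
    1 ≤ stiefelLogFactor β δ := by
  have fraction_nonneg : 0 ≤ δ ^ 3 / (6 - δ ^ 2) :=
    div_nonneg (pow_nonneg hδ 3) (sub_nonneg.mpr hδ6.le)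
  have poly_terms_nonneg : 0 ≤ 2 * β * δ + (4 * β ^ 2 / 3) * δ ^ 2 + δ ^ 2 / 6 := by positivity
  unfold stiefelLogFactor
  linarith

theorem stiefelLogXi_le_two_mul_sub_abs {β δ : ℝ} (hβ : 0 ≤ β) (hδ : 0 ≤ δ)
    (hδτ : 2 * δ * |1 - 2 * β| < 1) (hδ6 : δ ^ 2 < 6) :
    stiefelLogXi β δ ≤ 2 * β - |1 - 2 * β| := by
  have abs_le_eta := abs_le_stiefelLogEta hδ hδτ
  have eta_nonneg := (abs_nonneg (1 - 2 * β)).trans abs_le_eta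
  have eta_le_mul := le_mul_of_one_le_right eta_nonneg (one_le_stiefelLogFactor hβ hδ hδ6)
  exact sub_le_sub_left (abs_le_eta.trans eta_le_mul) (2 * β)

theorem xi_nonpos_of_beta_le_quarter (β δ τ η ξ : ℝ)
    (hβ0 : 0 < β) (hβ : β ≤ 1 / 4) (hδ : 0 < δ)
    (hδτ : 2 * δ * |1 - 2 * β| < 1) (hδ6 : δ ^ 2 < 6)
    (hτ : τ = 1 - 2 * β)
    (hη : η = |τ| * (1 + δ * |τ| + (2 / 3) * δ ^ 2 * |τ| ^ 2 -
      δ ^ 2 * |τ| ^ 2 * Real.log (1 - 2 * δ * |τ|)))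
    (hξ : ξ = 2 * β - η * (1 + 2 * β * δ + (4 * β ^ 2 / 3) * δ ^ 2 +
      δ ^ 2 / 6 + δ ^ 3 / (6 - δ ^ 2))) :
    ξ ≤ 0 := by
  subst hτ hη
  calc
    ξ = stiefelLogXi β δ := hξ
    _ ≤ 2 * β - |1 - 2 * β| := stiefelLogXi_le_two_mul_sub_abs hβ0.le hδ.le hδτ hδ6
    _ ≤ 2 * β - (1 - 2 * β) := sub_le_sub_left (le_abs_self _) _
    _ ≤ 0 := by linarith
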